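/- Let n be a positive integer. Then δ(m) < δ(n) for every positive integer m < n if and only if either n = 1 or n is a prime number. -/

import Mathlib

/-- `staircaseDelta n` is the minimum of `r + s` over all pairs of positive
integers `(r, s)` with `r ≤ s` and `r * s = n`. -/
noncomputable def staircaseDelta (n : ℕ) : ℕ :=
  sInf {w : ℕ | ∃ r s : ℕ, 0 < r ∧ r ≤ s ∧ r * s = n ∧ w = r + s}

theorem staircaseDelta_le {n r s : ℕ} (hr : 0 < r) (hrs : r ≤ s) (h : r * s = n) :
    staircaseDelta n ≤ r + s :=
  Nat.sInf_le ⟨r, s, hr, hrs, h, rfl⟩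

theorem staircaseDelta_prime {p : ℕ} (hp : p.Prime) : staircaseDelta p = p + 1 := by
  apply le_antisymm
  · have := staircaseDelta_le (n := p) one_pos hp.one_lt.le (one_mul p)
    omega
  · refine le_csInf ⟨1 + p, 1, p, one_pos, hp.one_lt.le, one_mul p, rfl⟩ ?_
    rintro w ⟨r, s, hr, hrs, h, rfl⟩
    rcases (Nat.dvd_prime hp).1 ⟨s, h.symm⟩ with h1 | h1
    · subst h1; omega
    · have := hp.one_lt
      subst h1
      nlinarith

/-- For a positive integer `n`, `δ(m) < δ(n)` for every positive `m < n` iff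
`n = 1` or `n` is prime. -/
theorem stmt10 (n : ℕ) (hn : 0 < n) :
    (∀ m : ℕ, 0 < m → m < n → staircaseDelta m < staircaseDelta n) ↔
      n = 1 ∨ Nat.Prime n := by
  constructor
  · intro H
    by_contra hcon
    push Not at hcon
    obtain ⟨h1, hnp⟩ := hcon
    obtain ⟨a, b, ha, hb, hab⟩ := (Nat.not_prime_iff_exists_mul_eq (by omega)).1 hnp
    have ha2 : 2 ≤ a := by
      by_contra hh
      interval_cases a <;> omega
    have hb2 : 2 ≤ b := by
      by_contra hh
      interval_cases b <;> omega
    have hle : staircaseDelta n ≤ a + b := by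
      rcases le_total a b with h | h
      · exact staircaseDelta_le (by omega) h hab
      · have := staircaseDelta_le (by omega) h ((mul_comm b a).trans hab)
        omega
    have hineq : 2 * (a + b) ≤ n + 4 := by
      obtain ⟨x, rfl⟩ := Nat.exists_eq_add_of_le ha2
      obtain ⟨y, rfl⟩ := Nat.exists_eq_add_of_le hb2
      nlinarith [Nat.zero_le (x * y)]
    obtain ⟨p, hp, hlt, hple⟩ := Nat.exists_prime_lt_and_le_two_mul (n / 2) (by omega)
    have hne : p ≠ n := fun h => hnp (h ▸ hp)
    have := H p hp.pos (by omega)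
    rw [staircaseDelta_prime hp] at this
    omega
  · rintro (rfl | hp) m hm hmn
    · omega
    · rw [staircaseDelta_prime hp]
      have := staircaseDelta_le (n := m) one_pos hm (one_mul m)
      omega
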